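/- arXiv:2605.09471 — 3 statements merged into one kernel-verified Lean document; each statement's English description precedes it below -/
import Mathlib

section
/- Risk of selecting among fixed candidate vectors by a noisy validation point. Let β₁,…,β_M ∈ ℝ^d be fixed vectors, θ₀ ∈ ℝ^d, and let θ̃₀^(1) satisfy, for all t > 0 and all a ∈ ℝ^d, P( aᵀ(θ̃₀^(1) − θ₀) > t ) ≤ C_τ·exp( −n₀ t² / (4τ²‖a‖₂²) ). Define ĵ := argmin_{j=1,…,M} ‖β_j − θ̃₀^(1)‖₂². Then there exists a constant C > 0 (depending only on C_τ) such that E‖β_ĵ − θ₀‖₂² ≤ 2·min_{j=1,…,M} ‖β_j − θ₀‖₂² + 4C²τ²·( min(log M, d) + 1 ) / n₀. -/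
open MeasureTheory ProbabilityTheory Real
open scoped ENNReal RealInnerProductSpace

noncomputable section

abbrev Euc (d : ℕ) := EuclideanSpace ℝ (Fin d)

/-!
Let `m` be the smallest `‖β j - θ₀‖`, attained at `j₀`, and let `ξ = θ̃ - θ₀` be the validation noise.
Optimality of the selected candidate `b` on the validation point gives
`‖b - θ₀‖² - m² ≤ 2 ⟪b - β j₀, ξ⟫`, and `‖b - β j₀‖ ≤ ‖b - θ₀‖ + m`, so half of the excess
`‖b - θ₀‖ - m` is at most the component of `ξ` along the unit vector in the direction `b - β j₀`.
The square of such a component is controlled in mean in two ways: by the logarithm of the number of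
directions, through a union bound, and by the squared norm of the projection of `ξ` on the span of
the directions, through the coordinates in an orthonormal basis.
-/

section UpperIntegral

variable {Ω : Type*} [MeasurableSpace Ω] {μ : Measure Ω} {f f' : Ω → ℝ≥0∞} {c c' : ℝ≥0∞}

/-- The upper Lebesgue integral of a possibly non-measurable `f` is at most `c`. This is encoded by
the existence of a measurable majorant, and unlike bounds on `∫⁻`, which is a lower integral for
such `f`, it is stable under sums. -/
def UpperLIntegralLE (f : Ω → ℝ≥0∞) (c : ℝ≥0∞) (μ : Measure Ω) : Prop :=
  ∃ g : Ω → ℝ≥0∞, Measurable g ∧ (∀ ω, f ω ≤ g ω) ∧ ∫⁻ ω, g ω ∂μ ≤ c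

namespace UpperLIntegralLE

lemma lintegral_le (hf : UpperLIntegralLE f c μ) : ∫⁻ ω, f ω ∂μ ≤ c := by
  obtain ⟨g, -, hfg, hg⟩ := hf
  exact (lintegral_mono hfg).trans hg

lemma mono (hf : UpperLIntegralLE f c μ) (hf' : ∀ ω, f' ω ≤ f ω) (hc : c ≤ c') :
    UpperLIntegralLE f' c' μ := by
  obtain ⟨g, hgm, hfg, hg⟩ := hf
  exact ⟨g, hgm, fun ω => (hf' ω).trans (hfg ω), hg.trans hc⟩

lemma const_add [IsProbabilityMeasure μ] (hf : UpperLIntegralLE f c μ) (a : ℝ≥0∞) :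
    UpperLIntegralLE (fun ω => a + f ω) (a + c) μ := by
  obtain ⟨g, hgm, hfg, hg⟩ := hf
  refine ⟨fun ω => a + g ω, hgm.const_add a, fun ω => add_le_add_right (hfg ω) a, ?_⟩
  rw [lintegral_add_left measurable_const, lintegral_const, measure_univ, mul_one]
  gcongr

lemma const_mul (hf : UpperLIntegralLE f c μ) (a : ℝ≥0∞) :
    UpperLIntegralLE (fun ω => a * f ω) (a * c) μ := by
  obtain ⟨g, hgm, hfg, hg⟩ := hf
  refine ⟨fun ω => a * g ω, hgm.const_mul a, fun ω => mul_le_mul_right (hfg ω) a, ?_⟩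
  rw [lintegral_const_mul a hgm]
  gcongr

lemma finset_sum {ι : Type*} {s : Finset ι} {F : ι → Ω → ℝ≥0∞} {C : ι → ℝ≥0∞}
    (hF : ∀ i, UpperLIntegralLE (F i) (C i) μ) :
    UpperLIntegralLE (fun ω => ∑ i ∈ s, F i ω) (∑ i ∈ s, C i) μ := by
  choose g hgm hFg hg using hF
  refine ⟨fun ω => ∑ i ∈ s, g i ω, Finset.measurable_sum s fun i _ => hgm i,
    fun ω => Finset.sum_le_sum fun i _ => hFg i ω, ?_⟩
  rw [lintegral_finsetSum s fun i _ => hgm i]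
  exact Finset.sum_le_sum fun i _ => hg i

end UpperLIntegralLE

lemma ofReal_le_tsum_indicator_lt (x : ℝ) :
    ENNReal.ofReal x ≤ ∑' k : ℕ, {k : ℕ | (k : ℝ) < x}.indicator (1 : ℕ → ℝ≥0∞) k :=
  calc ENNReal.ofReal x ≤ ENNReal.ofReal (⌈x⌉₊ : ℝ) := ENNReal.ofReal_le_ofReal (Nat.le_ceil x)
    _ = ∑ k ∈ Finset.range ⌈x⌉₊, 1 := by simp
    _ = ∑ k ∈ Finset.range ⌈x⌉₊, {k : ℕ | (k : ℝ) < x}.indicator (1 : ℕ → ℝ≥0∞) k := by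
      refine Finset.sum_congr rfl fun k hk => ?_
      have hkx : k ∈ {k : ℕ | (k : ℝ) < x} := Nat.lt_ceil.1 (Finset.mem_range.1 hk)
      rw [Set.indicator_of_mem hkx, Pi.one_apply]
    _ ≤ _ := ENNReal.sum_le_tsum _

lemma upperLIntegralLE_tsum_measure_lt (f : Ω → ℝ) :
    UpperLIntegralLE (fun ω => ENNReal.ofReal (f ω)) (∑' k : ℕ, μ {ω | (k : ℝ) < f ω}) μ := by
  let A : ℕ → Set Ω := fun k => toMeasurable μ {ω | (k : ℝ) < f ω}
  have hAm : ∀ k, MeasurableSet (A k) := fun k => measurableSet_toMeasurable _ _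
  have hm : ∀ k, Measurable ((A k).indicator (1 : Ω → ℝ≥0∞)) :=
    fun k => measurable_one.indicator (hAm k)
  refine ⟨fun ω => ∑' k, (A k).indicator 1 ω, Measurable.tsum hm, fun ω => ?_, ?_⟩
  · refine (ofReal_le_tsum_indicator_lt (f ω)).trans (ENNReal.tsum_le_tsum fun k => ?_)
    refine Set.indicator_le (s := {k : ℕ | (k : ℝ) < f ω})
      (g := fun k => (A k).indicator 1 ω) (fun k hk => ?_) k
    have hωA : ω ∈ A k := subset_toMeasurable μ _ hk
    rw [Set.indicator_of_mem hωA, Pi.one_apply, Pi.one_apply]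
  · rw [lintegral_tsum fun k => (hm k).aemeasurable]
    refine ENNReal.tsum_le_tsum fun k => ?_
    rw [lintegral_indicator_one (hAm k), measure_toMeasurable]

end UpperIntegral

section Tails

variable {Ω : Type*} [MeasurableSpace Ω] {μ : Measure Ω} [IsProbabilityMeasure μ]

lemma tsum_ofReal_mul_exp_neg_le {K : ℝ} (hK : 0 ≤ K) :
    ∑' k : ℕ, ENNReal.ofReal (K * exp (-((k : ℝ) + 1))) ≤ ENNReal.ofReal K := by
  have hsum : HasSum (fun k : ℕ => K * (1 / 2 / 2 ^ k)) (K * 1) :=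
    (hasSum_geometric_two' 1).mul_left K
  have hexp (k : ℕ) : exp (-((k : ℝ) + 1)) ≤ 1 / 2 / 2 ^ k :=
    calc exp (-((k : ℝ) + 1)) = exp (-1) ^ (k + 1) := by
          rw [← exp_nat_mul]; push_cast; ring_nf
      _ ≤ (1 / 2) ^ (k + 1) := pow_le_pow_left₀ (exp_nonneg _) exp_neg_one_lt_half.le _
      _ = 1 / 2 / 2 ^ k := by rw [pow_succ, one_div_pow]; ring
  calc ∑' k : ℕ, ENNReal.ofReal (K * exp (-((k : ℝ) + 1)))
      ≤ ∑' k : ℕ, ENNReal.ofReal (K * (1 / 2 / 2 ^ k)) := by gcongr with k; exact hexp k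
    _ = ENNReal.ofReal K := by
      rw [← ENNReal.ofReal_tsum_of_nonneg (fun k => by positivity) hsum.summable, hsum.tsum_eq,
        mul_one]

lemma upperLIntegralLE_of_exp_tail {f : Ω → ℝ} {K : ℝ} (hK : 0 ≤ K)
    (hf : ∀ t, 0 < t → μ {ω | t < f ω} ≤ ENNReal.ofReal (K * exp (-t))) :
    UpperLIntegralLE (fun ω => ENNReal.ofReal (f ω)) (ENNReal.ofReal (1 + K)) μ := by
  refine (upperLIntegralLE_tsum_measure_lt f).mono (fun _ => le_rfl) ?_
  rw [tsum_eq_zero_add' ENNReal.summable, ENNReal.ofReal_add zero_le_one hK, ENNReal.ofReal_one]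
  refine add_le_add prob_le_one (le_trans ?_ (tsum_ofReal_mul_exp_neg_le hK))
  refine ENNReal.tsum_le_tsum fun k => ?_
  exact_mod_cast hf (k + 1) (by positivity)

/-- A prefactor `A` in the tail costs only `log A`, the level below which the tail bound is void. -/
lemma upperLIntegralLE_sq_of_gaussian_tail {X : Ω → ℝ} (hX : ∀ ω, 0 ≤ X ω) {A K s : ℝ}
    (hA : 1 ≤ A) (hK : 0 ≤ K) (hs : 0 < s)
    (htail : ∀ t, 0 < t → μ {ω | t < X ω} ≤ ENNReal.ofReal (A * (K * exp (-(s * t ^ 2))))) :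
    UpperLIntegralLE (fun ω => ENNReal.ofReal (s * X ω ^ 2))
      (ENNReal.ofReal (log A + (1 + K))) μ := by
  have hlog : 0 ≤ log A := log_nonneg hA
  have hexcess : UpperLIntegralLE (fun ω => ENNReal.ofReal (s * X ω ^ 2 - log A))
      (ENNReal.ofReal (1 + K)) μ := by
    refine upperLIntegralLE_of_exp_tail hK fun t ht => ?_
    obtain ⟨r, hr, hsr⟩ : ∃ r, 0 < r ∧ s * r ^ 2 = t + log A := by
      refine ⟨√((t + log A) / s), by positivity, ?_⟩
      rw [sq_sqrt (by positivity), mul_div_cancel₀ _ hs.ne']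
    calc μ {ω | t < s * X ω ^ 2 - log A} ≤ μ {ω | r < X ω} := by
          refine measure_mono fun ω (hω : t < s * X ω ^ 2 - log A) => ?_
          refine lt_of_pow_lt_pow_left₀ 2 (hX ω) (lt_of_mul_lt_mul_left ?_ hs.le)
          linarith
      _ ≤ ENNReal.ofReal (A * (K * exp (-(s * r ^ 2)))) := htail r hr
      _ = ENNReal.ofReal (K * exp (-t)) := by
          rw [hsr, neg_add, exp_add, exp_neg (log A), exp_log (by positivity)]
          congr 1
          field_simp
  refine (hexcess.const_add (ENNReal.ofReal (log A))).mono (fun ω => ?_)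
    (ENNReal.ofReal_add hlog (by positivity)).ge
  calc ENNReal.ofReal (s * X ω ^ 2) = ENNReal.ofReal (log A + (s * X ω ^ 2 - log A)) := by
        rw [add_sub_cancel]
    _ ≤ _ := ENNReal.ofReal_add_le

end Tails

section SubGaussian

variable {Ω E ι : Type*} [MeasurableSpace Ω] [NormedAddCommGroup E] [InnerProductSpace ℝ E]
  {μ : Measure Ω} {ξ : Ω → E} {K s : ℝ}

/-- All the one-dimensional marginals of `ξ` along vectors of the unit ball have Gaussian tails with
rate `s` and prefactor `K`. The probabilities are outer measures, as `ξ` need not be measurable. -/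
def HasSubGaussianTail (ξ : Ω → E) (K s : ℝ) (μ : Measure Ω) : Prop :=
  ∀ a : E, ‖a‖ ≤ 1 → ∀ t, 0 < t →
    μ {ω | t < ⟪a, ξ ω⟫} ≤ ENNReal.ofReal (K * exp (-(s * t ^ 2)))

namespace HasSubGaussianTail

lemma of_scaled_tail {n τ : ℝ} (hn : 0 ≤ n) (hτ : 0 < τ) (hK : 0 ≤ K)
    (htail : ∀ a : E, ∀ t, 0 < t → μ {ω | t < ⟪a, ξ ω⟫} ≤
      ENNReal.ofReal (K * exp (-n * t ^ 2 / (4 * τ ^ 2 * ‖a‖ ^ 2)))) :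
    HasSubGaussianTail ξ K (n / (4 * τ ^ 2)) μ := by
  intro a ha t ht
  obtain rfl | ha0 := eq_or_ne a 0
  · simp [ht.not_gt]
  · have hpos : 0 < ‖a‖ := norm_pos_iff.2 ha0
    have hsq : ‖a‖ ^ 2 ≤ 1 := pow_le_one₀ hpos.le ha
    refine (htail a t ht).trans ?_
    gcongr
    rw [neg_mul, neg_div, neg_le_neg_iff, div_mul_eq_mul_div]
    exact div_le_div_of_nonneg_left (by positivity) (by positivity)
      (mul_le_of_le_one_right (by positivity) hsq)

lemma measure_lt_le_of_exists_le_inner [Fintype ι] (hξ : HasSubGaussianTail ξ K s μ) {u : ι → E}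
    (hu : ∀ j, ‖u j‖ ≤ 1) {X : Ω → ℝ} (hX : ∀ ω, ∃ j, X ω ≤ ⟪u j, ξ ω⟫) {t : ℝ} (ht : 0 < t) :
    μ {ω | t < X ω} ≤ ENNReal.ofReal (Fintype.card ι * (K * exp (-(s * t ^ 2)))) :=
  calc μ {ω | t < X ω} ≤ μ (⋃ j, {ω | t < ⟪u j, ξ ω⟫}) := by
        refine measure_mono fun ω (hω : t < X ω) => ?_
        obtain ⟨j, hj⟩ := hX ω
        exact Set.mem_iUnion.2 ⟨j, hω.trans_le hj⟩
    _ ≤ ∑ j, μ {ω | t < ⟪u j, ξ ω⟫} := measure_iUnion_fintype_le μ _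
    _ ≤ ∑ _j : ι, ENNReal.ofReal (K * exp (-(s * t ^ 2))) :=
        Finset.sum_le_sum fun j _ => hξ (u j) (hu j) t ht
    _ = _ := by
        rw [Finset.sum_const, Finset.card_univ, nsmul_eq_mul,
          ENNReal.ofReal_mul (Nat.cast_nonneg _), ENNReal.ofReal_natCast]

variable [IsProbabilityMeasure μ]

lemma upperLIntegralLE_sq_log_card [Fintype ι] (hξ : HasSubGaussianTail ξ K s μ) (hK : 0 ≤ K)
    (hs : 0 < s) {u : ι → E} (hu : ∀ j, ‖u j‖ ≤ 1) {X : Ω → ℝ} (hX0 : ∀ ω, 0 ≤ X ω)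
    (hX : ∀ ω, ∃ j, X ω ≤ ⟪u j, ξ ω⟫) :
    UpperLIntegralLE (fun ω => ENNReal.ofReal (s * X ω ^ 2))
      (ENNReal.ofReal (log (Fintype.card ι) + (1 + K))) μ := by
  obtain ⟨ω⟩ := nonempty_of_isProbabilityMeasure μ
  have : Nonempty ι := (hX ω).nonempty
  exact upperLIntegralLE_sq_of_gaussian_tail hX0 (by exact_mod_cast Fintype.card_pos (α := ι)) hK hs
    fun t ht => hξ.measure_lt_le_of_exists_le_inner hu hX ht

lemma upperLIntegralLE_sq_inner (hξ : HasSubGaussianTail ξ K s μ) (hK : 0 ≤ K) (hs : 0 < s)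
    {a : E} (ha : ‖a‖ ≤ 1) :
    UpperLIntegralLE (fun ω => ENNReal.ofReal (s * ⟪a, ξ ω⟫ ^ 2)) (ENNReal.ofReal (2 + K)) μ := by
  have habs : ∀ ω, ∃ j, |⟪a, ξ ω⟫| ≤ ⟪![a, -a] j, ξ ω⟫ := by
    intro ω
    obtain h | h := abs_choice ⟪a, ξ ω⟫
    · exact ⟨0, h.le⟩
    · exact ⟨1, by simp [h, inner_neg_left]⟩
  refine (hξ.upperLIntegralLE_sq_log_card hK hs (Fin.forall_fin_two.2 ⟨ha, by simpa using ha⟩)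
    (fun _ => abs_nonneg _) habs).mono (fun ω => by rw [sq_abs]) (ENNReal.ofReal_le_ofReal ?_)
  rw [Fintype.card_fin, Nat.cast_ofNat]
  linarith [log_two_lt_d9]

lemma upperLIntegralLE_norm_sq_orthogonalProjectionOnto (hξ : HasSubGaussianTail ξ K s μ)
    (hK : 0 ≤ K) (hs : 0 < s) (V : Submodule ℝ E) [FiniteDimensional ℝ V] :
    UpperLIntegralLE (fun ω => ENNReal.ofReal (s * ‖V.orthogonalProjectionOnto (ξ ω)‖ ^ 2))
      (ENNReal.ofReal (Module.finrank ℝ V * (2 + K))) μ := by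
  let b := stdOrthonormalBasis ℝ V
  refine (UpperLIntegralLE.finset_sum (s := Finset.univ) fun i =>
    hξ.upperLIntegralLE_sq_inner hK hs (a := b i) (b.orthonormal.1 i).le).mono (fun ω => ?_) ?_
  · rw [← b.sum_sq_inner_right, Finset.mul_sum,
      ENNReal.ofReal_sum_of_nonneg fun i _ => by positivity]
    simp only [Submodule.inner_orthogonalProjectionOnto_eq_of_mem_left, le_refl]
  · rw [Finset.sum_const, Finset.card_univ, Fintype.card_fin, nsmul_eq_mul,
      ENNReal.ofReal_mul (Nat.cast_nonneg _), ENNReal.ofReal_natCast]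

theorem upperLIntegralLE_sq_min [Fintype ι] (hξ : HasSubGaussianTail ξ K s μ) (hK : 0 ≤ K)
    (hs : 0 < s) {V : Submodule ℝ E} [FiniteDimensional ℝ V] {u : ι → E} (huV : ∀ j, u j ∈ V)
    (hu : ∀ j, ‖u j‖ ≤ 1) {X : Ω → ℝ} (hX0 : ∀ ω, 0 ≤ X ω) (hX : ∀ ω, ∃ j, X ω ≤ ⟪u j, ξ ω⟫) :
    UpperLIntegralLE (fun ω => ENNReal.ofReal (s * X ω ^ 2)) (ENNReal.ofReal
      ((2 + K) * (min (log (Fintype.card ι)) (Module.finrank ℝ V) + 1))) μ := by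
  obtain h | h := le_total (log (Fintype.card ι)) (Module.finrank ℝ V)
  · refine (hξ.upperLIntegralLE_sq_log_card hK hs hu hX0 hX).mono (fun _ => le_rfl)
      (ENNReal.ofReal_le_ofReal ?_)
    rw [min_eq_left h]
    nlinarith [log_natCast_nonneg (Fintype.card ι)]
  · refine (hξ.upperLIntegralLE_norm_sq_orthogonalProjectionOnto hK hs V).mono (fun ω => ?_)
      (ENNReal.ofReal_le_ofReal ?_)
    · obtain ⟨j, hj⟩ := hX ω
      have hproj : X ω ≤ ‖V.orthogonalProjectionOnto (ξ ω)‖ :=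
        calc X ω ≤ ⟪u j, ξ ω⟫ := hj
          _ = ⟪(⟨u j, huV j⟩ : V), V.orthogonalProjectionOnto (ξ ω)⟫ :=
            (Submodule.inner_orthogonalProjectionOnto_eq_of_mem_left ⟨u j, huV j⟩ (ξ ω)).symm
          _ ≤ ‖u j‖ * ‖V.orthogonalProjectionOnto (ξ ω)‖ := real_inner_le_norm _ _
          _ ≤ ‖V.orthogonalProjectionOnto (ξ ω)‖ :=
            mul_le_of_le_one_left (norm_nonneg _) (hu j)
      have := hX0 ω
      gcongr
    · rw [min_eq_right h]
      linarith

end HasSubGaussianTail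

end SubGaussian

lemma enorm_sq_le_add_half_sub_sq {E : Type*} [SeminormedAddGroup E] (x : E) (m : ℝ)
    {s : ℝ} (hs : 0 < s) :
    ‖x‖ₑ ^ 2 ≤ ENNReal.ofReal (2 * m ^ 2) +
      ENNReal.ofReal (8 / s) * ENNReal.ofReal (s * ((‖x‖ - m) / 2) ^ 2) := by
  rw [← ofReal_norm, ← ENNReal.ofReal_pow (norm_nonneg x), ← ENNReal.ofReal_mul (by positivity),
    ← ENNReal.ofReal_add (by positivity) (by positivity)]
  refine ENNReal.ofReal_le_ofReal ?_
  have hcancel : 8 / s * (s * ((‖x‖ - m) / 2) ^ 2) = 2 * (‖x‖ - m) ^ 2 := by field_simp; ring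
  linarith [add_sq_le (a := m) (b := ‖x‖ - m)]

section Selection

variable {E : Type*} [NormedAddCommGroup E] [InnerProductSpace ℝ E] {b b' z θ : E}

lemma norm_sub_sq_sub_norm_sub_sq_le_inner (h : ‖b - z‖ ≤ ‖b' - z‖) :
    ‖b - θ‖ ^ 2 - ‖b' - θ‖ ^ 2 ≤ 2 * ⟪b - b', z - θ⟫ := by
  have hexpand (x : E) : ‖x - z‖ ^ 2 = ‖x - θ‖ ^ 2 - 2 * ⟪x - θ, z - θ⟫ + ‖z - θ‖ ^ 2 := by
    rw [← norm_sub_sq_real, sub_sub_sub_cancel_right]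
  have hinner : ⟪b - b', z - θ⟫ = ⟪b - θ, z - θ⟫ - ⟪b' - θ, z - θ⟫ := by
    rw [← inner_sub_left, sub_sub_sub_cancel_right]
  have hsq : ‖b - z‖ ^ 2 ≤ ‖b' - z‖ ^ 2 := pow_le_pow_left₀ (norm_nonneg _) h 2
  linarith [hexpand b, hexpand b']

lemma half_norm_sub_sub_norm_sub_le_inner (h : ‖b - z‖ ≤ ‖b' - z‖) (hle : ‖b' - θ‖ ≤ ‖b - θ‖) :
    (‖b - θ‖ - ‖b' - θ‖) / 2 ≤ ⟪‖b - b'‖⁻¹ • (b - b'), z - θ⟫ := by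
  obtain rfl | hne := eq_or_ne b b'
  · simp
  · rw [real_inner_smul_left, inv_mul_eq_div, div_le_div_iff₀ two_pos (norm_sub_pos_iff.2 hne)]
    calc (‖b - θ‖ - ‖b' - θ‖) * ‖b - b'‖
        ≤ (‖b - θ‖ - ‖b' - θ‖) * (‖b - θ‖ + ‖b' - θ‖) := by
          refine mul_le_mul_of_nonneg_left ?_ (sub_nonneg.2 hle)
          simpa only [norm_sub_rev θ b'] using norm_sub_le_norm_sub_add_norm_sub b θ b'
      _ = ‖b - θ‖ ^ 2 - ‖b' - θ‖ ^ 2 := by ring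
      _ ≤ ⟪b - b', z - θ⟫ * 2 := by
          linarith [norm_sub_sq_sub_norm_sub_sq_le_inner (θ := θ) h]

end Selection

theorem HasSubGaussianTail.upperLIntegralLE_selection_risk {Ω E ι : Type*} [MeasurableSpace Ω]
    [NormedAddCommGroup E] [InnerProductSpace ℝ E] [Fintype ι] {P : Measure Ω}
    [IsProbabilityMeasure P] {K s : ℝ} (hK : 0 ≤ K) (hs : 0 < s) {β : ι → E} {θ0 : E}
    {θval : Ω → E} (hξ : HasSubGaussianTail (fun ω => θval ω - θ0) K s P) {jhat : Ω → ι}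
    (hjhat : ∀ ω, ∀ j, ‖β (jhat ω) - θval ω‖ ≤ ‖β j - θval ω‖)
    {j₀ : ι} (hj₀ : ∀ j, ‖β j₀ - θ0‖ ≤ ‖β j - θ0‖) :
    UpperLIntegralLE (fun ω => ‖β (jhat ω) - θ0‖ₑ ^ 2)
      (ENNReal.ofReal (2 * ‖β j₀ - θ0‖ ^ 2 + 8 / s * ((2 + K) *
        (min (log (Fintype.card ι)) (Module.finrank ℝ (vectorSpan ℝ (Set.range β))) + 1)))) P := by
  have := finiteDimensional_vectorSpan_range ℝ β
  let V := vectorSpan ℝ (Set.range β)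
  let u : ι → E := fun j => ‖β j - β j₀‖⁻¹ • (β j - β j₀)
  have huV (j : ι) : u j ∈ V :=
    V.smul_mem _ (vsub_mem_vectorSpan ℝ (Set.mem_range_self j) (Set.mem_range_self j₀))
  have hu (j : ι) : ‖u j‖ ≤ 1 := by simpa [u, norm_smul] using inv_mul_le_one
  let X : Ω → ℝ := fun ω => (‖β (jhat ω) - θ0‖ - ‖β j₀ - θ0‖) / 2
  have hX0 (ω : Ω) : 0 ≤ X ω := div_nonneg (sub_nonneg.2 (hj₀ (jhat ω))) zero_le_two
  have hX (ω : Ω) : ∃ j, X ω ≤ ⟪u j, θval ω - θ0⟫ :=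
    ⟨jhat ω, half_norm_sub_sub_norm_sub_le_inner (hjhat ω j₀) (hj₀ (jhat ω))⟩
  have hexcess := hξ.upperLIntegralLE_sq_min hK hs huV hu hX0 hX
  refine ((hexcess.const_mul (ENNReal.ofReal (8 / s))).const_add
    (ENNReal.ofReal (2 * ‖β j₀ - θ0‖ ^ 2))).mono
      (fun ω => enorm_sq_le_add_half_sub_sq _ _ hs) (le_of_eq ?_)
  rw [← ENNReal.ofReal_mul (by positivity), ← ENNReal.ofReal_add (by positivity) (by positivity)]

theorem selection_by_validation_general {Ω E ι : Type*} [MeasurableSpace Ω] [NormedAddCommGroup E]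
    [InnerProductSpace ℝ E] [Fintype ι] {P : Measure Ω} [IsProbabilityMeasure P] {K n τ : ℝ}
    (hK : 0 ≤ K) (hn : 0 < n) (hτ : 0 < τ) {β : ι → E} {θ0 : E} {θval : Ω → E}
    (htail : ∀ a : E, ∀ t : ℝ, 0 < t → P {ω | t < ⟪a, θval ω - θ0⟫} ≤
      ENNReal.ofReal (K * exp (-n * t ^ 2 / (4 * τ ^ 2 * ‖a‖ ^ 2))))
    {jhat : Ω → ι} (hjhat : ∀ ω, ∀ j, ‖β (jhat ω) - θval ω‖ ≤ ‖β j - θval ω‖) {d : ℕ}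
    (hd : Module.finrank ℝ (vectorSpan ℝ (Set.range β)) ≤ d) :
    ∫⁻ ω, ‖β (jhat ω) - θ0‖ₑ ^ 2 ∂P ≤
      ENNReal.ofReal (2 * (⨅ j, ‖β j - θ0‖ ^ 2) +
        4 * (8 * (2 + K)) * τ ^ 2 * (min (log (Fintype.card ι)) d + 1) / n) := by
  obtain ⟨ω₀⟩ := nonempty_of_isProbabilityMeasure P
  have : Nonempty ι := ⟨jhat ω₀⟩
  obtain ⟨j₀, hj₀⟩ := exists_eq_ciInf_of_finite (f := fun j => ‖β j - θ0‖ ^ 2)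
  have hmin (j : ι) : ‖β j₀ - θ0‖ ≤ ‖β j - θ0‖ :=
    le_of_sq_le_sq (hj₀.trans_le (ciInf_le (Set.finite_range _).bddBelow j)) (norm_nonneg _)
  have hξ := HasSubGaussianTail.of_scaled_tail hn.le hτ hK htail
  refine (hξ.upperLIntegralLE_selection_risk hK (by positivity) hjhat hmin).lintegral_le.trans
    (ENNReal.ofReal_le_ofReal ?_)
  have hscale : 8 / (n / (4 * τ ^ 2)) = 32 * τ ^ 2 / n := by field_simp; norm_num
  calc 2 * ‖β j₀ - θ0‖ ^ 2 + 8 / (n / (4 * τ ^ 2)) * ((2 + K) *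
        (min (log (Fintype.card ι)) (Module.finrank ℝ (vectorSpan ℝ (Set.range β))) + 1))
      ≤ 2 * ‖β j₀ - θ0‖ ^ 2 +
          8 / (n / (4 * τ ^ 2)) * ((2 + K) * (min (log (Fintype.card ι)) d + 1)) := by gcongr
    _ = _ := by rw [hscale, hj₀]; ring

/-- **Lemma (Risk of selecting among fixed candidates by a noisy validation point).**
If `ĵ = argmin_j ‖β_j − θ̃₀^{(1)}‖₂²`, then
`E‖β_ĵ − θ₀‖₂² ≤ 2 min_j ‖β_j − θ₀‖₂² + 4C²τ²(min(log M, d) + 1)/n₀`. -/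
theorem selection_by_validation :
    ∀ Cτ : ℝ, 0 < Cτ →
    ∃ C : ℝ, 0 < C ∧
    ∀ (Ω : Type) (_ : MeasurableSpace Ω) (P : Measure Ω), IsProbabilityMeasure P →
    ∀ d M n₀ : ℕ, 1 ≤ d → 1 ≤ M → 1 ≤ n₀ →
    ∀ τ : ℝ, 0 < τ →
    ∀ β : Fin M → Euc d, ∀ θ0 : Euc d, ∀ θval : Ω → Euc d,
    -- sub-Gaussian tail of the validation estimate, for every direction a
    (∀ a : Euc d, ∀ t : ℝ, 0 < t →
      P {ω | t < ⟪a, θval ω - θ0⟫} ≤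
        ENNReal.ofReal (Cτ * Real.exp (-(n₀ : ℝ) * t ^ 2 / (4 * τ ^ 2 * ‖a‖ ^ 2)))) →
    -- ĵ picks a minimizer of the validation error
    ∀ jhat : Ω → Fin M, Measurable jhat →
      (∀ ω, ∀ j : Fin M, ‖β (jhat ω) - θval ω‖ ≤ ‖β j - θval ω‖) →
      (∫⁻ ω, (‖β (jhat ω) - θ0‖₊ : ℝ≥0∞) ^ 2 ∂P) ≤
        ENNReal.ofReal (2 * (⨅ j : Fin M, ‖β j - θ0‖ ^ 2) +
          4 * C ^ 2 * τ ^ 2 * (min (Real.log (M : ℝ)) (d : ℝ) + 1) / (n₀ : ℝ)) := by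
  refine fun Cτ hCτ => ⟨√(8 * (2 + Cτ)), by positivity, fun Ω _ P _ d M n₀ _ _ hn₀ τ hτ β θ0 θval
    htail jhat _ hjhat => ?_⟩
  rw [sq_sqrt (by positivity)]
  simpa only [Fintype.card_fin, enorm_eq_nnnorm] using selection_by_validation_general hCτ.le
    (Nat.cast_pos.2 hn₀) hτ htail hjhat
    ((Submodule.finrank_le _).trans_eq finrank_euclideanSpace_fin)
end
end

section
/- Oracle index for the max-risk criterion. Let 0 = h₀ ≤ h₁ ≤ ⋯ ≤ h_m and σ₀ ≥ σ₁ ≥ ⋯ ≥ σ_m ≥ 0 be real numbers, with the convention σ_{−1} := +∞. Define r⋆ := max{ 0 ≤ r ≤ m : σ_{r−1} ≥ h_r } and R_r := max( h_r², σ_r² ) for r = 0,…,m. Then R_{r⋆} = min_{0 ≤ r ≤ m} R_r; moreover, R_r is nonincreasing in r for r ≤ r⋆ and nondecreasing in r for r ≥ r⋆. -/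
noncomputable section

/-- The oracle index `r⋆ = max{0 ≤ r ≤ m : σ_{r−1} ≥ h_r}` (the convention
`σ_{−1} = +∞` makes `r = 0` always feasible). -/
def oracleIndex (m : ℕ) (h σ : ℕ → ℝ) : ℕ :=
  sSup {r | r ≤ m ∧ (r = 0 ∨ h r ≤ σ (r - 1))}

/-!
The index `k = r⋆` is where `h` and `σ` cross: feasibility of `k` gives
`h s ≤ h k ≤ σ (k - 1) ≤ σ r` for `r < s ≤ k`, and infeasibility of `r + 1` gives
`σ r < h (r + 1) ≤ h s` for `k ≤ r < s`. So, up to `k`, both terms of a later risk are bounded by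
an earlier `σ`, and, from `k` on, both terms of an earlier risk are bounded by a later `h`.
-/

open Set

section Order

variable {ι α : Type*}

theorem isMinOn_Iic_of_antitoneOn_of_monotoneOn [LinearOrder ι] [Preorder α] {f : ι → α} {a b : ι}
    (hanti : AntitoneOn f (Iic a)) (hmono : MonotoneOn f (Icc a b)) : IsMinOn f (Iic b) a := by
  intro i hib
  rcases le_total i a with hia | hai
  · exact hanti hia self_mem_Iic hia
  · exact hmono ⟨le_rfl, hai.trans hib⟩ ⟨hai, hib⟩ hai

variable [PartialOrder ι] [SemilatticeSup α] {f g : ι → α} {s : Set ι}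

theorem antitoneOn_sup_of_forall_lt_le (hg : AntitoneOn g s)
    (hfg : ∀ i ∈ s, ∀ j ∈ s, i < j → f j ≤ g i) : AntitoneOn (fun i ↦ f i ⊔ g i) s := by
  intro i hi j hj hij
  rcases hij.eq_or_lt with rfl | hlt
  · exact le_rfl
  · exact le_sup_of_le_right (sup_le (hfg i hi j hj hlt) (hg hi hj hij))

theorem monotoneOn_sup_of_forall_lt_le (hf : MonotoneOn f s)
    (hgf : ∀ i ∈ s, ∀ j ∈ s, i < j → g i ≤ f j) : MonotoneOn (fun i ↦ f i ⊔ g i) s := by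
  intro i hi j hj hij
  rcases hij.eq_or_lt with rfl | hlt
  · exact le_rfl
  · exact le_sup_of_le_left (sup_le (hf hi hj hij) (hgf i hi j hj hlt))

end Order

/-- The indices `r ≤ m` with `σ_{r-1} ≥ h_r`, over which `r⋆` is the maximum. The convention
`σ_{-1} = +∞` is encoded by admitting `r = 0` outright, so the truncated `0 - 1` plays no role. -/
def feasibleIndices {α : Type*} [LE α] (m : ℕ) (h σ : ℕ → α) : Set ℕ :=
  {r | r ≤ m ∧ (r = 0 ∨ h r ≤ σ (r - 1))}

theorem isGreatest_oracleIndex (m : ℕ) (h σ : ℕ → ℝ) :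
    IsGreatest (feasibleIndices m h σ) (oracleIndex m h σ) :=
  have hbdd : BddAbove (feasibleIndices m h σ) := ⟨m, fun _ hr ↦ hr.1⟩
  ⟨Nat.sSup_mem ⟨0, m.zero_le, Or.inl rfl⟩ hbdd, fun _ hr ↦ le_csSup hbdd hr⟩

section Crossing

variable {α : Type*} {m k r s : ℕ} {h σ : ℕ → α}

theorem le_of_lt_of_le_of_mem_feasibleIndices [Preorder α] (hh : MonotoneOn h (Iic m))
    (hσ : AntitoneOn σ (Iic m)) (hk : k ∈ feasibleIndices m h σ) (hrs : r < s) (hsk : s ≤ k) :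
    h s ≤ σ r := by
  obtain ⟨hkm, hfeas⟩ := hk
  have hk_ne_zero : k ≠ 0 := by lia
  have hr_pred : r ≤ k - 1 := by lia
  have hpred_m : k - 1 ≤ m := by lia
  calc
    h s ≤ h k := hh (hsk.trans hkm) hkm hsk
    _ ≤ σ (k - 1) := hfeas.resolve_left hk_ne_zero
    _ ≤ σ r := hσ (hr_pred.trans hpred_m) hpred_m hr_pred

theorem le_of_le_of_lt_of_mem_upperBounds [LinearOrder α] (hh : MonotoneOn h (Iic m))
    (hk : k ∈ upperBounds (feasibleIndices m h σ)) (hkr : k ≤ r) (hrs : r < s) (hsm : s ≤ m) :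
    σ r ≤ h s := by
  have hr_succ : r + 1 ≤ m := hrs.trans_le hsm
  have hlt : σ r < h (r + 1) := by
    by_contra! hle
    exact (Nat.lt_succ_of_le hkr).not_ge (hk ⟨hr_succ, Or.inr hle⟩)
  exact hlt.le.trans (hh hr_succ hsm hrs)

end Crossing

theorem oracle_index_minimizes_general {α β : Type*} [LinearOrder α] [SemilatticeSup β]
    {m k : ℕ} {h σ : ℕ → α} {φ : α → β} {c : α}
    (hk : IsGreatest (feasibleIndices m h σ) k)
    (hmono : ∀ r, r < m → h r ≤ h (r + 1))
    (σmono : ∀ r, r < m → σ (r + 1) ≤ σ r)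
    (hφ : MonotoneOn φ (Ici c)) (hc : c ≤ h 0) (σc : c ≤ σ m) :
    k ≤ m ∧
    (∀ r, r ≤ m → φ (h k) ⊔ φ (σ k) ≤ φ (h r) ⊔ φ (σ r)) ∧
    (∀ r s, r ≤ s → s ≤ k → φ (h s) ⊔ φ (σ s) ≤ φ (h r) ⊔ φ (σ r)) ∧
    (∀ r s, k ≤ r → r ≤ s → s ≤ m → φ (h r) ⊔ φ (σ r) ≤ φ (h s) ⊔ φ (σ s)) := by
  have hkm : k ≤ m := hk.1.1
  have hh : MonotoneOn h (Iic m) :=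
    monotoneOn_of_le_add_one ordConnected_Iic fun r _ _ hr ↦ hmono r hr
  have hσ : AntitoneOn σ (Iic m) :=
    antitoneOn_of_add_one_le ordConnected_Iic fun r _ _ hr ↦ σmono r hr
  have h_mem : MapsTo h (Iic m) (Ici c) := fun r hr ↦ hc.trans (hh m.zero_le hr r.zero_le)
  have σ_mem : MapsTo σ (Iic m) (Ici c) := fun _ hr ↦ σc.trans (hσ hr self_mem_Iic hr)
  have hanti : AntitoneOn (fun r ↦ φ (h r) ⊔ φ (σ r)) (Iic k) :=
    antitoneOn_sup_of_forall_lt_le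
      ((hφ.comp_AntitoneOn hσ σ_mem).mono (Iic_subset_Iic.2 hkm))
      fun r hr s hs hrs ↦ hφ (h_mem (hs.trans hkm)) (σ_mem (hr.trans hkm))
        (le_of_lt_of_le_of_mem_feasibleIndices hh hσ hk.1 hrs hs)
  have hmon : MonotoneOn (fun r ↦ φ (h r) ⊔ φ (σ r)) (Icc k m) :=
    monotoneOn_sup_of_forall_lt_le
      ((hφ.comp hh h_mem).mono Icc_subset_Iic_self)
      fun r hr s hs hrs ↦ hφ (σ_mem hr.2) (h_mem hs.2)
        (le_of_le_of_lt_of_mem_upperBounds hh hk.2 hr.1 hrs hs.2)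
  exact ⟨hkm, fun _ hr ↦ isMinOn_Iic_of_antitoneOn_of_monotoneOn hanti hmon hr,
    fun _ _ hrs hs ↦ hanti (hrs.trans hs) hs hrs,
    fun _ _ hr hrs hs ↦ hmon ⟨hr, hrs.trans hs⟩ ⟨hr.trans hrs, hs⟩ hrs⟩

/-- **Lemma (Oracle index for the max-risk criterion).** For `0 = h₀ ≤ h₁ ≤ ⋯ ≤ h_m`
nondecreasing and `σ₀ ≥ σ₁ ≥ ⋯ ≥ σ_m ≥ 0` nonincreasing, with
`R_r := max(h_r², σ_r²)`, the oracle index `r⋆` satisfies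
`R_{r⋆} = min_{0 ≤ r ≤ m} R_r`; moreover `R_r` is nonincreasing for `r ≤ r⋆` and
nondecreasing for `r⋆ ≤ r ≤ m`. -/
theorem oracle_index_minimizes
    (m : ℕ) (h σ : ℕ → ℝ)
    (h0 : h 0 = 0)
    (hmono : ∀ r, r < m → h r ≤ h (r + 1))
    (σmono : ∀ r, r < m → σ (r + 1) ≤ σ r)
    (σnonneg : ∀ r, r ≤ m → 0 ≤ σ r) :
    oracleIndex m h σ ≤ m ∧
    (∀ r, r ≤ m →
      max (h (oracleIndex m h σ) ^ 2) (σ (oracleIndex m h σ) ^ 2) ≤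
        max (h r ^ 2) (σ r ^ 2)) ∧
    (∀ r s, r ≤ s → s ≤ oracleIndex m h σ →
      max (h s ^ 2) (σ s ^ 2) ≤ max (h r ^ 2) (σ r ^ 2)) ∧
    (∀ r s, oracleIndex m h σ ≤ r → r ≤ s → s ≤ m →
      max (h r ^ 2) (σ r ^ 2) ≤ max (h s ^ 2) (σ s ^ 2)) :=
  oracle_index_minimizes_general (isGreatest_oracleIndex m h σ) hmono σmono
    pow_left_monotoneOn h0.ge (σnonneg m le_rfl)
end
end

section
/- Norm tail bound from uniform one-dimensional sub-Gaussian projections via a 1/2-net. Let X be a random vector in ℝ^d and β > 0 satisfy: for every unit vector a ∈ ℝ^d and every t > 0, P(aᵀX > t) ≤ exp(−t²/β²). Then, with c := 2·√(2·log 5), for every t > c·β·√d, P( ‖X‖₂ > t ) ≤ exp( −t²/(2β²) ). -/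
open MeasureTheory Real
open scoped ENNReal RealInnerProductSpace

noncomputable section

/-!
A maximal `1/2`-separated subset of the unit sphere is a `1/2`-net and, by comparing volumes of
balls, has at most `5 ^ d` points. Some point `a` of the net is within `1/2` of the direction
`u` of `X`, and `⟪a, u⟫ = 1 - ‖a - u‖ ^ 2 / 2 ≥ 7 / 8`; the triangle inequality would only give
`1 / 2`, too little for the exponent claimed. After the union bound over the net, the surplus
`(7 / 8) ^ 2 - 1 / 2 = 17 / 64` in the exponent absorbs the factor `5 ^ d`.
-/

section Covering

open Metric Module
open scoped NNReal

variable {E : Type*} [NormedAddCommGroup E] [NormedSpace ℝ E] [FiniteDimensional ℝ E]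

theorem card_le_five_pow_of_isSeparated_half {x : E} {r : ℝ≥0} (hr : 0 < r) {s : Finset E}
    (hs : (s : Set E) ⊆ closedBall x r) (hsep : IsSeparated (r / 2 : ℝ≥0) (s : Set E)) :
    s.card ≤ 5 ^ finrank ℝ E := by
  have hc : 0 < 2 / (r : ℝ) := by positivity
  have hnorm (v : E) : ‖(2 / (r : ℝ)) • v‖ = 2 / r * ‖v‖ := norm_smul_of_nonneg hc.le v
  have hinj : Function.Injective fun y : E ↦ (2 / (r : ℝ)) • (y - x) :=
    (smul_right_injective E hc.ne').comp sub_left_injective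
  rw [← Finset.card_map ⟨_, hinj⟩]
  refine Besicovitch.card_le_of_separated _ ?_ ?_
  · simp only [Finset.forall_mem_map, Function.Embedding.coeFn_mk, hnorm]
    intro y hy
    have hyx : ‖y - x‖ ≤ r := mem_closedBall_iff_norm.1 (hs hy)
    calc 2 / (r : ℝ) * ‖y - x‖ ≤ 2 / r * r := by gcongr
      _ = 2 := by field_simp
  · simp only [Finset.forall_mem_map, Function.Embedding.coeFn_mk, ← smul_sub,
      sub_sub_sub_cancel_right, hnorm]
    intro y hy z hz hyz
    have hdist : (r : ℝ) / 2 < ‖y - z‖ := by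
      have hedist : (r / 2 : ℝ≥0) < edist y z := hsep hy hz fun h ↦ hyz (h ▸ rfl)
      rw [edist_nndist, ENNReal.coe_lt_coe, ← NNReal.coe_lt_coe, coe_nndist, dist_eq_norm]
        at hedist
      simpa only [NNReal.coe_div, NNReal.coe_ofNat] using hedist
    calc (1 : ℝ) = 2 / r * (r / 2) := by field_simp
      _ ≤ 2 / r * ‖y - z‖ := by gcongr

theorem packingNumber_half_le_five_pow {x : E} {r : ℝ≥0} (hr : 0 < r) {A : Set E}
    (hA : A ⊆ closedBall x r) : packingNumber (r / 2) A ≤ 5 ^ finrank ℝ E := by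
  refine iSup_le fun C ↦ iSup₂_le fun hCA hC ↦ ?_
  by_contra! hcard
  obtain ⟨s, hsC, hs⟩ := Set.exists_subset_encard_eq (Order.add_one_le_of_lt hcard)
  norm_cast at hs
  have hsfin : s.Finite := Set.finite_of_encard_eq_coe hs
  lift s to Finset E using hsfin
  have hle := card_le_five_pow_of_isSeparated_half hr (hsC.trans (hCA.trans hA)) (hC.subset hsC)
  rw [Set.encard_coe_eq_coe_finsetCard] at hs
  norm_cast at hs
  exact absurd hle (by lia)

theorem exists_finset_isCover_half {x : E} {r : ℝ≥0} (hr : 0 < r) {A : Set E}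
    (hA : A ⊆ closedBall x r) :
    ∃ s : Finset E, (s : Set E) ⊆ A ∧ IsCover (r / 2) A (s : Set E) ∧
      s.card ≤ 5 ^ finrank ℝ E := by
  have hcard : coveringNumber (r / 2) A ≤ (5 ^ finrank ℝ E : ℕ) := by
    exact_mod_cast (coveringNumber_le_packingNumber _ _).trans
      (packingNumber_half_le_five_pow hr hA)
  obtain ⟨C, hCA, hCfin, hC, hCcard⟩ :=
    exists_set_encard_eq_coveringNumber (hcard.trans_lt (ENat.natCast_lt_top _)).ne
  lift C to Finset E using hCfin
  rw [← hCcard, Set.encard_coe_eq_coe_finsetCard, Nat.cast_le] at hcard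
  exact ⟨C, hCA, hC, hcard⟩

end Covering

theorem pow_mul_exp_neg_sq_div_le {n : ℕ} {b c β t : ℝ} (hb : 0 < b) (hβ : β ≠ 0)
    (h : n * log b * β ^ 2 ≤ (c ^ 2 - 1 / 2) * t ^ 2) :
    b ^ n * exp (-(c * t) ^ 2 / β ^ 2) ≤ exp (-t ^ 2 / (2 * β ^ 2)) := by
  have hn : n * log b ≤ (c ^ 2 - 1 / 2) * t ^ 2 / β ^ 2 := (le_div_iff₀ (by positivity)).2 h
  calc b ^ n * exp (-(c * t) ^ 2 / β ^ 2)
      = exp (n * log b + -(c * t) ^ 2 / β ^ 2) := by rw [exp_add, exp_nat_mul, exp_log hb]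
    _ ≤ exp ((c ^ 2 - 1 / 2) * t ^ 2 / β ^ 2 + -(c * t) ^ 2 / β ^ 2) := by gcongr
    _ = exp (-t ^ 2 / (2 * β ^ 2)) := by congr 1; field_simp; ring

theorem mul_mul_sq_le_sq_div_eight_of_sqrt_le {n x β t : ℝ} (hn : 0 ≤ n) (hx : 0 ≤ x)
    (hβ : 0 ≤ β) (h : 2 * √(2 * x) * β * √n ≤ t) : n * x * β ^ 2 ≤ t ^ 2 / 8 := by
  calc n * x * β ^ 2 = (2 * √(2 * x) * β * √n) ^ 2 / 8 := by
        rw [mul_pow, mul_pow, mul_pow, sq_sqrt (by positivity), sq_sqrt hn]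
        ring
    _ ≤ t ^ 2 / 8 := by gcongr

section InnerProductSpace

open Metric Module
open scoped NNReal

variable {E : Type*} [NormedAddCommGroup E] [InnerProductSpace ℝ E]

theorem one_sub_sq_div_two_le_inner {a u : E} {ε : ℝ} (ha : ‖a‖ = 1) (hu : ‖u‖ = 1)
    (hau : ‖a - u‖ ≤ ε) : 1 - ε ^ 2 / 2 ≤ ⟪a, u⟫ := by
  have hsq : ‖a - u‖ ^ 2 ≤ ε ^ 2 := by gcongr
  rw [norm_sub_sq_real, ha, hu] at hsq
  linarith

theorem exists_mem_mul_norm_le_inner_of_isCover {ε : ℝ≥0} {s : Set E} (hs : s ⊆ sphere 0 1)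
    (hcover : IsCover ε (sphere 0 1) s) {x : E} (hx : x ≠ 0) :
    ∃ a ∈ s, (1 - (ε : ℝ) ^ 2 / 2) * ‖x‖ ≤ ⟪a, x⟫ := by
  have hu : ‖‖x‖⁻¹ • x‖ = 1 := norm_smul_inv_norm (𝕜 := ℝ) hx
  obtain ⟨a, ha, hxa⟩ := Set.mem_iUnion₂.1
    (hcover.subset_iUnion_closedBall (mem_sphere_zero_iff_norm.2 hu))
  refine ⟨a, ha, ?_⟩
  have hinner := one_sub_sq_div_two_le_inner (mem_sphere_zero_iff_norm.1 (hs ha)) hu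
    (mem_closedBall_iff_norm'.1 hxa)
  rwa [real_inner_smul_right, inv_mul_eq_div, le_div_iff₀ (norm_pos_iff.2 hx)] at hinner

variable {Ω : Type*} [MeasurableSpace Ω] {μ : Measure Ω} {X : Ω → E}

theorem measure_lt_norm_le_card_mul_of_isCover {ε : ℝ≥0} {s : Finset E}
    (hs : (s : Set E) ⊆ sphere 0 1) (hcover : IsCover ε (sphere 0 1) (s : Set E))
    (hε : (ε : ℝ) ^ 2 < 2) {t : ℝ} (ht : 0 ≤ t) {C : ℝ≥0∞}
    (hC : ∀ a ∈ s, μ {ω | (1 - (ε : ℝ) ^ 2 / 2) * t < ⟪a, X ω⟫} ≤ C) :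
    μ {ω | t < ‖X ω‖} ≤ s.card * C := by
  have hsub : {ω | t < ‖X ω‖} ⊆ ⋃ a ∈ s, {ω | (1 - (ε : ℝ) ^ 2 / 2) * t < ⟪a, X ω⟫} := by
    intro ω (hω : t < ‖X ω‖)
    obtain ⟨a, ha, hle⟩ := exists_mem_mul_norm_le_inner_of_isCover hs hcover
      (norm_pos_iff.1 (ht.trans_lt hω))
    exact Set.mem_biUnion ha ((mul_lt_mul_of_pos_left hω (by linarith)).trans_le hle)
  calc μ {ω | t < ‖X ω‖}
      ≤ μ (⋃ a ∈ s, {ω | (1 - (ε : ℝ) ^ 2 / 2) * t < ⟪a, X ω⟫}) := measure_mono hsub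
    _ ≤ ∑ a ∈ s, μ {ω | (1 - (ε : ℝ) ^ 2 / 2) * t < ⟪a, X ω⟫} := measure_biUnion_finset_le _ _
    _ ≤ s.card * C := by simpa only [nsmul_eq_mul] using Finset.sum_le_card_nsmul _ _ _ hC

theorem measure_lt_norm_le_five_pow_mul [FiniteDimensional ℝ E] {t : ℝ} (ht : 0 ≤ t) {C : ℝ≥0∞}
    (hC : ∀ a : E, ‖a‖ = 1 → μ {ω | 7 / 8 * t < ⟪a, X ω⟫} ≤ C) :
    μ {ω | t < ‖X ω‖} ≤ 5 ^ finrank ℝ E * C := by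
  obtain ⟨s, hs, hcover, hcard⟩ :=
    exists_finset_isCover_half (E := E) (r := 1) one_pos sphere_subset_closedBall
  have hε : 1 - ((1 / 2 : ℝ≥0) : ℝ) ^ 2 / 2 = 7 / 8 := by norm_num
  calc μ {ω | t < ‖X ω‖} ≤ s.card * C := by
        refine measure_lt_norm_le_card_mul_of_isCover hs hcover (by norm_num) ht fun a ha ↦ ?_
        simpa only [hε] using hC a (mem_sphere_zero_iff_norm.1 (hs ha))
    _ ≤ 5 ^ finrank ℝ E * C := by gcongr; exact_mod_cast hcard

theorem norm_tail_from_projections_general [FiniteDimensional ℝ E] {β : ℝ} (hβ : β ≠ 0)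
    (htail : ∀ a : E, ‖a‖ = 1 → ∀ t : ℝ, 0 < t →
      μ {ω | t < ⟪a, X ω⟫} ≤ ENNReal.ofReal (exp (-t ^ 2 / β ^ 2)))
    {t : ℝ} (ht : 0 < t) (hdim : finrank ℝ E * log 5 * β ^ 2 ≤ 17 / 64 * t ^ 2) :
    μ {ω | t < ‖X ω‖} ≤ ENNReal.ofReal (exp (-t ^ 2 / (2 * β ^ 2))) := by
  calc μ {ω | t < ‖X ω‖}
      ≤ 5 ^ finrank ℝ E * ENNReal.ofReal (exp (-(7 / 8 * t) ^ 2 / β ^ 2)) :=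
        measure_lt_norm_le_five_pow_mul ht.le fun a ha ↦ htail a ha _ (by positivity)
    _ = ENNReal.ofReal (5 ^ finrank ℝ E * exp (-(7 / 8 * t) ^ 2 / β ^ 2)) := by
        rw [ENNReal.ofReal_mul (by positivity), ENNReal.ofReal_pow (by norm_num),
          ENNReal.ofReal_ofNat]
    _ ≤ ENNReal.ofReal (exp (-t ^ 2 / (2 * β ^ 2))) :=
        ENNReal.ofReal_le_ofReal <|
          pow_mul_exp_neg_sq_div_le (by norm_num) hβ (by linarith)

end InnerProductSpace

/-- **Lemma (Norm tail bound from uniform one-dimensional sub-Gaussian projections).**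
If `P(aᵀX > t) ≤ exp(−t²/β²)` for every unit vector `a` and every `t > 0`, then with
`c = 2√(2 log 5)`, for every `t > cβ√d`, `P(‖X‖₂ > t) ≤ exp(−t²/(2β²))`. -/
theorem norm_tail_from_projections
    (d : ℕ) (hd : 1 ≤ d)
    (Ω : Type) (_ : MeasurableSpace Ω) (P : Measure Ω) (hP : IsProbabilityMeasure P)
    (X : Ω → Euc d) (β : ℝ) (hβ : 0 < β)
    (htail : ∀ a : Euc d, ‖a‖ = 1 → ∀ t : ℝ, 0 < t →
      P {ω | t < ⟪a, X ω⟫} ≤ ENNReal.ofReal (Real.exp (-t ^ 2 / β ^ 2))) :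
    ∀ t : ℝ, 2 * Real.sqrt (2 * Real.log 5) * β * Real.sqrt (d : ℝ) < t →
      P {ω | t < ‖X ω‖} ≤ ENNReal.ofReal (Real.exp (-t ^ 2 / (2 * β ^ 2))) := by
  intro t ht
  have ht0 : 0 < t := lt_of_le_of_lt (by positivity) ht
  have hdim := mul_mul_sq_le_sq_div_eight_of_sqrt_le d.cast_nonneg (by positivity) hβ.le ht.le
  refine norm_tail_from_projections_general hβ.ne' htail ht0 ?_
  rw [finrank_euclideanSpace_fin]
  linarith [sq_nonneg t]
end
end
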